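/- Grönwall-type lemma for square-energy differential inequalities (the abstract step used to pass from the differential inequality to (pf:ene-low-10) in the proof of Lemma 3.2): let c ≥ 0, let W : [0,∞) → ℝ be continuous and nonnegative with t ↦ W(t)² differentiable on [0,∞), and let G : [0,∞) → ℝ be continuous and nonnegative. If (1/2)·d/dt(W(t)²) + c·W(t)² ≤ G(t)·W(t) for all t ≥ 0, then for all t ≥ 0: W(t) ≤ e^{−ct}·W(0) + ∫₀ᵗ e^{−c(t−s)}·G(s) ds. -/

import Mathlib

/-- Grönwall-type lemma for square-energy differential inequalities (the abstract step used to
pass from the differential inequality to (pf:ene-low-10) in the proof of Lemma 3.2):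
if `W ≥ 0` is continuous on `[0,∞)` with `W²` differentiable, `G ≥ 0` is continuous, `c ≥ 0`,
and `(1/2)(W²)′(t) + cW(t)² ≤ G(t)W(t)` for all `t ≥ 0`, then
`W(t) ≤ e^{−ct}W(0) + ∫₀ᵗ e^{−c(t−s)}G(s) ds` for all `t ≥ 0`. -/
theorem gronwall_square_energy
    (c : ℝ) (hc : 0 ≤ c) (W W2' G : ℝ → ℝ)
    (hWcont : ContinuousOn W (Set.Ici 0))
    (hWnonneg : ∀ t : ℝ, 0 ≤ t → 0 ≤ W t)
    (hW2 : ∀ t : ℝ, 0 ≤ t → HasDerivAt (fun s => W s ^ 2) (W2' t) t)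
    (hGcont : ContinuousOn G (Set.Ici 0))
    (hGnonneg : ∀ t : ℝ, 0 ≤ t → 0 ≤ G t)
    (hineq : ∀ t : ℝ, 0 ≤ t → (1 / 2) * W2' t + c * W t ^ 2 ≤ G t * W t) :
    ∀ t : ℝ, 0 ≤ t →
      W t ≤ Real.exp (-c * t) * W 0
        + ∫ s in (0:ℝ)..t, Real.exp (-c * (t - s)) * G s := by
  intro T hT
  set g : ℝ → ℝ := fun s => Real.exp (c * s) * G (max s 0) with hg
  have hgc : Continuous g := by
    have h1 : Continuous (fun s : ℝ => G (max s 0)) :=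
      hGcont.comp_continuous (by fun_prop) (fun s => le_max_right s 0)
    exact (by fun_prop : Continuous fun s : ℝ => Real.exp (c * s)).mul h1
  have hI : ∀ x, HasDerivAt (fun x => ∫ s in (0:ℝ)..x, g s) (g x) x := fun x =>
    hgc.integral_hasStrictDerivAt 0 x |>.hasDerivAt
  have hIn : ∀ x, 0 ≤ x → 0 ≤ ∫ s in (0:ℝ)..x, g s := fun x hx =>
    intervalIntegral.integral_nonneg hx (fun s hs =>
      mul_nonneg (Real.exp_pos _).le (hGnonneg _ (le_max_right s 0)))
  have hE : ∀ x : ℝ, HasDerivAt (fun x => Real.exp (c * x)) (Real.exp (c * x) * c) x := fun x => by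
    simpa using ((hasDerivAt_id x).const_mul c).exp
  have key : ∀ ε : ℝ, 0 < ε →
      Real.exp (c * T) * W T ≤ W 0 + ε * (1 + T) + ∫ s in (0:ℝ)..T, g s := by
    intro ε hε
    have hb : ∀ x, HasDerivAt (fun x => W 0 + ε * (1 + x) + ∫ s in (0:ℝ)..x, g s) (ε + g x) x := by
      intro x
      have h := ((((hasDerivAt_id x).const_add 1).const_mul ε).const_add (W 0)).add (hI x)
      rw [mul_one] at h
      exact h
    have hbpos : ∀ x, 0 ≤ x → 0 < W 0 + ε * (1 + x) + ∫ s in (0:ℝ)..x, g s := by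
      intro x hx
      have := hIn x hx
      have := hWnonneg 0 le_rfl
      positivity
    have hf : ∀ x, 0 ≤ x → HasDerivAt (fun x => Real.exp (c * x) ^ 2 * W x ^ 2)
        (2 * Real.exp (c * x) ^ 2 * c * W x ^ 2 + Real.exp (c * x) ^ 2 * W2' x) x := by
      intro x hx
      have h := ((hE x).pow 2).mul (hW2 x hx)
      refine h.congr_deriv ?_
      simp only [Pi.pow_apply, Nat.cast_ofNat, Nat.add_one_sub_one, pow_one]
      ring
    have hB := fun x => (hb x).pow 2
    have main := image_le_of_deriv_right_lt_deriv_boundary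
      (a := 0) (b := T)
      (fun x hx => (hf x hx.1).continuousAt.continuousWithinAt)
      (fun x hx => (hf x hx.1).hasDerivWithinAt) (B := fun x => (W 0 + ε * (1 + x) + ∫ s in (0:ℝ)..x, g s) ^ 2) (by
        have := hWnonneg 0 le_rfl
        simp
        nlinarith) hB (by
        intro x hx hxe
        have hp := hbpos x hx.1
        have hw := hWnonneg x hx.1
        have hV : Real.exp (c * x) * W x = W 0 + ε * (1 + x) + ∫ s in (0:ℝ)..x, g s := by
          rw [← sq_eq_sq₀ (by positivity) hp.le, mul_pow]
          exact hxe
        have hgx : g x = Real.exp (c * x) * G x := by simp [hg, max_eq_left hx.1]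
        simp only [← hV] at hp ⊢
        rw [hgx]
        have h1 := mul_le_mul_of_nonneg_left (hineq x hx.1) (sq_nonneg (Real.exp (c * x)))
        have h2 := mul_pos hp hε
        simp
        nlinarith) (Set.right_mem_Icc.2 hT)
    have hp := hbpos T hT
    have hw := hWnonneg T hT
    rw [← sq_le_sq₀ (by positivity) hp.le, mul_pow]
    exact main
  have key2 : Real.exp (c * T) * W T ≤ W 0 + ∫ s in (0:ℝ)..T, g s := by
    refine le_of_forall_pos_le_add fun δ hδ => ?_
    have h1 : 0 < 1 + T := by linarith
    have := key (δ / (1 + T)) (by positivity)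
    rw [div_mul_cancel₀ _ h1.ne'] at this
    linarith
  have hint : ∫ s in (0:ℝ)..T, Real.exp (-c * (T - s)) * G s
      = Real.exp (-c * T) * ∫ s in (0:ℝ)..T, g s := by
    rw [← intervalIntegral.integral_const_mul]
    refine intervalIntegral.integral_congr fun s hs => ?_
    rw [Set.uIcc_of_le hT] at hs
    simp only [hg, max_eq_left hs.1]
    rw [← mul_assoc, ← Real.exp_add]
    ring_nf
  rw [hint, ← mul_add]
  have h3 := mul_le_mul_of_nonneg_left key2 (Real.exp_pos (-c * T)).le
  rw [← mul_assoc, ← Real.exp_add] at h3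
  simpa using h3
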